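/- arXiv:2001.06866 — 2 statements merged into one kernel-verified Lean document; each statement's English description precedes it below -/
import Mathlib

section
/- The edge lengths of the construction tree are: dist(A₁',F₁₂) = dist(A₂',F₁₂) = a12/(2·cos(θ/2)), dist(A₃,F₃₄) = dist(A₄,F₃₄) = a34/(2·cos(θ/2)), and dist(F₁₂,F₃₄) = d − ((a12 + a34)/2)·tan(θ/2). -/
open Real EuclideanGeometry

noncomputable def pt (x y : ℝ) : EuclideanSpace ℝ (Fin 2) :=
  (WithLp.equiv 2 (Fin 2 → ℝ)).symm ![x, y]

/-!
The four outer edges are inclined at the angle `θ / 2` to the horizontal, so each has length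
`1 / cos (θ / 2)` times its horizontal extent. The inner edge is vertical, and `F₁₂` does not lie
below `F₃₄` because the slope `tan (θ / 2) = (a12 + a34) / (2 * d)` is at most `1` as soon as the
mean of the two parallel sides is at most the height `d`.
-/

theorem dist_pt_pt (x y u v : ℝ) :
    dist (pt x y) (pt u v) = √((x - u) ^ 2 + (y - v) ^ 2) := by
  simp [pt, EuclideanSpace.dist_eq, Real.dist_eq]

theorem dist_pt_same_fst (x y v : ℝ) : dist (pt x y) (pt x v) = |y - v| := by
  simp [dist_pt_pt, sqrt_sq_eq_abs]

theorem dist_pt_neg_fst_pt_zero (x y v : ℝ) :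
    dist (pt (-x) y) (pt 0 v) = dist (pt x y) (pt 0 v) := by
  simp [dist_pt_pt]

theorem sqrt_one_add_tan_sq {φ : ℝ} (hφ : cos φ ≠ 0) : √(1 + tan φ ^ 2) = |cos φ|⁻¹ := by
  rw [← sqrt_sq_eq_abs, ← inv_one_add_tan_sq hφ, sqrt_inv, inv_inv]

theorem dist_pt_pt_add_mul_tan {φ : ℝ} (hφ : cos φ ≠ 0) (x y u : ℝ) :
    dist (pt x y) (pt u (y + (u - x) * tan φ)) = |u - x| / |cos φ| := by
  calc dist (pt x y) (pt u (y + (u - x) * tan φ))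
      = √((u - x) ^ 2 * (1 + tan φ ^ 2)) := by rw [dist_pt_pt]; ring_nf
    _ = |u - x| * √(1 + tan φ ^ 2) := by rw [sqrt_mul (sq_nonneg _), sqrt_sq_eq_abs]
    _ = |u - x| / |cos φ| := by rw [sqrt_one_add_tan_sq hφ, div_eq_mul_inv]

theorem dist_half_base_apex_below {a φ : ℝ} (ha : 0 ≤ a) (hφ : 0 < cos φ) (y : ℝ) :
    dist (pt (a / 2) y) (pt 0 (y - a / 2 * tan φ)) = a / (2 * cos φ) := by
  calc dist (pt (a / 2) y) (pt 0 (y - a / 2 * tan φ))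
      = |0 - a / 2| / |cos φ| := by rw [← dist_pt_pt_add_mul_tan hφ.ne' _ y]; ring_nf
    _ = a / (2 * cos φ) := by
      rw [zero_sub, abs_neg, abs_of_nonneg (by positivity), abs_of_pos hφ, div_div]

theorem dist_half_base_apex_above {a φ : ℝ} (ha : 0 ≤ a) (hφ : 0 < cos φ) (y : ℝ) :
    dist (pt (a / 2) y) (pt 0 (y + a / 2 * tan φ)) = a / (2 * cos φ) := by
  simpa only [tan_neg, cos_neg, mul_neg, sub_neg_eq_add] using
    dist_half_base_apex_below ha (φ := -φ) (by rwa [cos_neg]) y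

theorem stmt_2_general {a12 a34 d θ : ℝ} (ha12 : 0 < a12) (ha34 : 0 < a34)
    (hd : a12 + a34 ≤ 2 * d) (hθ : θ = 2 * arctan ((a12 + a34) / (2 * d))) :
    dist (pt (-(a12 / 2)) d) (pt 0 (d - a12 / 2 * tan (θ / 2))) = a12 / (2 * cos (θ / 2)) ∧
    dist (pt (a12 / 2) d) (pt 0 (d - a12 / 2 * tan (θ / 2))) = a12 / (2 * cos (θ / 2)) ∧
    dist (pt (a34 / 2) 0) (pt 0 (a34 / 2 * tan (θ / 2))) = a34 / (2 * cos (θ / 2)) ∧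
    dist (pt (-(a34 / 2)) 0) (pt 0 (a34 / 2 * tan (θ / 2))) = a34 / (2 * cos (θ / 2)) ∧
    dist (pt 0 (d - a12 / 2 * tan (θ / 2))) (pt 0 (a34 / 2 * tan (θ / 2))) =
      d - (a12 + a34) / 2 * tan (θ / 2) := by
  have half_angle : θ / 2 = arctan ((a12 + a34) / (2 * d)) := by
    rw [hθ, mul_div_cancel_left₀ _ two_ne_zero]
  have cos_pos : 0 < cos (θ / 2) := half_angle ▸ cos_arctan_pos _
  have tan_le_one : tan (θ / 2) ≤ 1 := by
    rw [half_angle, tan_arctan]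
    exact div_le_one_of_le₀ hd (by linarith)
  have upper := dist_half_base_apex_below ha12.le cos_pos d
  have lower : dist (pt (a34 / 2) 0) (pt 0 (a34 / 2 * tan (θ / 2))) = a34 / (2 * cos (θ / 2)) := by
    simpa only [zero_add] using dist_half_base_apex_above ha34.le cos_pos 0
  have gap_nonneg : 0 ≤ d - (a12 + a34) / 2 * tan (θ / 2) := by
    have := mul_le_of_le_one_right (by positivity : 0 ≤ (a12 + a34) / 2) tan_le_one
    linarith
  refine ⟨(dist_pt_neg_fst_pt_zero _ _ _).trans upper, upper, lower,
    (dist_pt_neg_fst_pt_zero _ _ _).trans lower, ?_⟩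
  rw [dist_pt_same_fst, sub_sub, ← add_mul, ← add_div, abs_of_nonneg gap_nonneg]

theorem stmt_2 (a12 a34 d θ : ℝ) (ha12 : 0 < a12) (ha34 : 0 < a34)
    (hd : max a12 a34 < d)
    (hθ : θ = 2 * Real.arctan ((a12 + a34) / (2 * d)))
    (A₁' A₂' A₃ A₄ F₁₂ F₃₄ : EuclideanSpace ℝ (Fin 2))
    (hA₁ : A₁' = pt (-(a12 / 2)) d) (hA₂ : A₂' = pt (a12 / 2) d)
    (hA₃ : A₃ = pt (a34 / 2) 0) (hA₄ : A₄ = pt (-(a34 / 2)) 0)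
    (hF₁₂ : F₁₂ = pt 0 (d - a12 / 2 * Real.tan (θ / 2)))
    (hF₃₄ : F₃₄ = pt 0 (a34 / 2 * Real.tan (θ / 2))) :
    dist A₁' F₁₂ = a12 / (2 * Real.cos (θ / 2)) ∧
    dist A₂' F₁₂ = a12 / (2 * Real.cos (θ / 2)) ∧
    dist A₃ F₃₄ = a34 / (2 * Real.cos (θ / 2)) ∧
    dist A₄ F₃₄ = a34 / (2 * Real.cos (θ / 2)) ∧
    dist F₁₂ F₃₄ = d - (a12 + a34) / 2 * Real.tan (θ / 2) := by
  subst hA₁ hA₂ hA₃ hA₄ hF₁₂ hF₃₄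
  exact stmt_2_general ha12 ha34 (by linarith [max_lt_iff.1 hd]) hθ
end

section
/- The Steiner points satisfy the 120° condition: ∠ A₁' O₁₂ A₂' = ∠ A₁' O₁₂ O₃₄ = ∠ A₂' O₁₂ O₃₄ = 2π/3 and ∠ A₄ O₃₄ A₃ = ∠ A₄ O₃₄ O₁₂ = ∠ A₃ O₃₄ O₁₂ = 2π/3. -/
open Real EuclideanGeometry

/-!
Let `M` be the midpoint of the base of an isosceles triangle and let the apex `O` satisfy
`MA = √3 · MO`. The right triangle `A M O` then has tangent `√3` at `O`, so its angle there is
`π / 3`. Two such angles make up the apex angle, and continuing the axis beyond `O` to a point `Q`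
leaves the supplement `π - π / 3` on either side. The bases of the trapezium carry two such
triangles with a common axis, and the apex of each serves as the point `Q` of the other.
-/

section SteinerPoint

variable {V P : Type*} [NormedAddCommGroup V] [InnerProductSpace ℝ V] [MetricSpace P]
  [NormedAddTorsor V P] {A B M O Q : P}

theorem angle_eq_pi_div_three_of_angle_eq_pi_div_two (hM : ∠ O M A = π / 2) (hO : O ≠ M)
    (hdist : dist A M = √3 * dist O M) : ∠ A O M = π / 3 := by
  rw [angle_comm] at hM
  rw [angle_comm, angle_eq_arctan_of_angle_eq_pi_div_two hM hO, hdist,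
    mul_div_cancel_right₀ _ (dist_ne_zero.mpr hO), arctan_sqrt_three]

theorem angle_eq_two_pi_div_three_of_angle_eq_pi_div_two (hM : ∠ O M A = π / 2)
    (hQ : Sbtw ℝ M O Q) (hdist : dist A M = √3 * dist O M) : ∠ A O Q = 2 * π / 3 := by
  have hAOM := angle_eq_pi_div_three_of_angle_eq_pi_div_two hM hQ.ne_left hdist
  have hsupplement : ∠ A O M + ∠ A O Q = π :=
    angle_add_angle_eq_pi_of_angle_eq_pi A hQ.angle₁₂₃_eq_pi
  linarith

theorem angle_apex_eq_two_pi_div_three_of_dist_eq (hOAB : dist O A = dist O B)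
    (hO : O ≠ midpoint ℝ A B)
    (hdist : dist A (midpoint ℝ A B) = √3 * dist O (midpoint ℝ A B)) :
    ∠ A O B = 2 * π / 3 := by
  have hAB : A ≠ B := by
    rintro rfl
    simp_all
  have hdist' : dist B (midpoint ℝ A B) = √3 * dist O (midpoint ℝ A B) := by
    rw [← hdist, dist_left_midpoint_eq_dist_right_midpoint]
  have hAOM := angle_eq_pi_div_three_of_angle_eq_pi_div_two
    (angle_left_midpoint_eq_pi_div_two_of_dist_eq hOAB) hO hdist
  have hBOM := angle_eq_pi_div_three_of_angle_eq_pi_div_two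
    (angle_right_midpoint_eq_pi_div_two_of_dist_eq hOAB) hO hdist'
  have hsplit : ∠ A O (midpoint ℝ A B) + ∠ (midpoint ℝ A B) O B = ∠ A O B :=
    angle_add_angle_eq_of_sbtw (sbtw_midpoint_of_ne ℝ hAB)
  rw [angle_comm (midpoint ℝ A B)] at hsplit
  linarith

theorem angles_eq_two_pi_div_three_of_dist_eq (hOAB : dist O A = dist O B)
    (hdist : dist A (midpoint ℝ A B) = √3 * dist O (midpoint ℝ A B))
    (hQ : Sbtw ℝ (midpoint ℝ A B) O Q) :
    ∠ A O B = 2 * π / 3 ∧ ∠ A O Q = 2 * π / 3 ∧ ∠ B O Q = 2 * π / 3 := by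
  have hdist' : dist B (midpoint ℝ A B) = √3 * dist O (midpoint ℝ A B) := by
    rw [← hdist, dist_left_midpoint_eq_dist_right_midpoint]
  exact ⟨angle_apex_eq_two_pi_div_three_of_dist_eq hOAB hQ.ne_left hdist,
    angle_eq_two_pi_div_three_of_angle_eq_pi_div_two
      (angle_left_midpoint_eq_pi_div_two_of_dist_eq hOAB) hQ hdist,
    angle_eq_two_pi_div_three_of_angle_eq_pi_div_two
      (angle_right_midpoint_eq_pi_div_two_of_dist_eq hOAB) hQ hdist'⟩

end SteinerPoint

theorem dist_pt (x y x' y' : ℝ) : dist (pt x y) (pt x' y') = √((x - x') ^ 2 + (y - y') ^ 2) := by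
  simp [EuclideanSpace.dist_eq, pt, Real.dist_eq]

theorem midpoint_pt (x y x' y' : ℝ) :
    midpoint ℝ (pt x y) (pt x' y') = pt ((x + x') / 2) ((y + y') / 2) := by
  ext i
  fin_cases i <;> simp [midpoint_eq_smul_add, pt] <;> ring

theorem lineMap_pt (x y z t : ℝ) :
    AffineMap.lineMap (pt x y) (pt x z) t = pt x (AffineMap.lineMap y z t) := by
  ext i
  fin_cases i <;> simp [AffineMap.lineMap_apply, pt]

theorem pt_injective (x : ℝ) : Function.Injective (pt x) := by
  intro y z h
  simpa [pt] using h

theorem sbtw_pt {x y₁ y₂ y₃ : ℝ} (h : Sbtw ℝ y₁ y₂ y₃) : Sbtw ℝ (pt x y₁) (pt x y₂) (pt x y₃) := by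
  obtain ⟨⟨t, ht, rfl⟩, hleft, hright⟩ := h
  exact ⟨⟨t, ht, lineMap_pt x y₁ y₃ t⟩, (pt_injective x).ne hleft,
    (pt_injective x).ne hright⟩

theorem angles_pt_eq_two_pi_div_three {x y c z : ℝ} (hx : |x| = √3 * |c - y|)
    (h : Sbtw ℝ y c z) :
    ∠ (pt (-x) y) (pt 0 c) (pt x y) = 2 * π / 3 ∧ ∠ (pt (-x) y) (pt 0 c) (pt 0 z) = 2 * π / 3 ∧
      ∠ (pt x y) (pt 0 c) (pt 0 z) = 2 * π / 3 := by
  have hmid : midpoint ℝ (pt (-x) y) (pt x y) = pt 0 y := by simp [midpoint_pt]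
  refine angles_eq_two_pi_div_three_of_dist_eq (by simp [dist_pt]) ?_ ?_
  · simpa [hmid, dist_pt, sqrt_sq_eq_abs] using hx
  · rw [hmid]
    exact sbtw_pt h

theorem add_div_two_mul_lt_of_max_lt {a b c d : ℝ} (hc : 1 ≤ c) (hd : 0 < d)
    (habd : max a b < d) : (a + b) / (2 * c) < d := by
  obtain ⟨had, hbd⟩ := max_lt_iff.mp habd
  rw [div_lt_iff₀ (by positivity)]
  calc a + b < d * 2 := by linarith
    _ ≤ d * (2 * c) := by gcongr; linarith

theorem stmt_9_general (a12 a34 d : ℝ) (ha12 : 0 < a12) (ha34 : 0 < a34)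
    (hd : (a12 + a34) / (2 * √3) < d)
    (A₁' A₂' A₃ A₄ O₁₂ O₃₄ : EuclideanSpace ℝ (Fin 2))
    (hA₁ : A₁' = pt (-(a12 / 2)) d) (hA₂ : A₂' = pt (a12 / 2) d)
    (hA₃ : A₃ = pt (a34 / 2) 0) (hA₄ : A₄ = pt (-(a34 / 2)) 0)
    (hO₁₂ : O₁₂ = pt 0 (d - a12 / (2 * √3)))
    (hO₃₄ : O₃₄ = pt 0 (a34 / (2 * √3))) :
    ∠ A₁' O₁₂ A₂' = 2 * π / 3 ∧ ∠ A₁' O₁₂ O₃₄ = 2 * π / 3 ∧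
    ∠ A₂' O₁₂ O₃₄ = 2 * π / 3 ∧ ∠ A₄ O₃₄ A₃ = 2 * π / 3 ∧
    ∠ A₄ O₃₄ O₁₂ = 2 * π / 3 ∧ ∠ A₃ O₃₄ O₁₂ = 2 * π / 3 := by
  subst hA₁ hA₂ hA₃ hA₄ hO₁₂ hO₃₄
  have height_pos {a : ℝ} (ha : 0 < a) : 0 < a / (2 * √3) := by positivity
  have half_width {a : ℝ} (ha : 0 < a) : |a / 2| = √3 * |a / (2 * √3)| := by
    rw [abs_of_pos (half_pos ha), abs_of_pos (height_pos ha)]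
    field_simp
  have hO : a34 / (2 * √3) < d - a12 / (2 * √3) := by
    rw [add_div] at hd
    linarith
  have htop := angles_pt_eq_two_pi_div_three (x := a12 / 2) (c := d - a12 / (2 * √3))
    (by simpa using half_width ha12) (Sbtw.of_lt_of_lt hO (sub_lt_self d (height_pos ha12))).symm
  have hbottom := angles_pt_eq_two_pi_div_three (x := a34 / 2)
    (by simpa using half_width ha34) (.of_lt_of_lt (height_pos ha34) hO)
  exact ⟨htop.1, htop.2.1, htop.2.2, hbottom⟩

theorem stmt_9 (a12 a34 d : ℝ) (ha12 : 0 < a12) (ha34 : 0 < a34)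
    (hd : max a12 a34 < d)
    (A₁' A₂' A₃ A₄ O₁₂ O₃₄ : EuclideanSpace ℝ (Fin 2))
    (hA₁ : A₁' = pt (-(a12 / 2)) d) (hA₂ : A₂' = pt (a12 / 2) d)
    (hA₃ : A₃ = pt (a34 / 2) 0) (hA₄ : A₄ = pt (-(a34 / 2)) 0)
    (hO₁₂ : O₁₂ = pt 0 (d - a12 / (2 * Real.sqrt 3)))
    (hO₃₄ : O₃₄ = pt 0 (a34 / (2 * Real.sqrt 3))) :
    ∠ A₁' O₁₂ A₂' = 2 * π / 3 ∧ ∠ A₁' O₁₂ O₃₄ = 2 * π / 3 ∧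
    ∠ A₂' O₁₂ O₃₄ = 2 * π / 3 ∧ ∠ A₄ O₃₄ A₃ = 2 * π / 3 ∧
    ∠ A₄ O₃₄ O₁₂ = 2 * π / 3 ∧ ∠ A₃ O₃₄ O₁₂ = 2 * π / 3 :=
  stmt_9_general a12 a34 d ha12 ha34
    (add_div_two_mul_lt_of_max_lt (by simp) (ha12.trans (max_lt_iff.mp hd).1) hd)
    A₁' A₂' A₃ A₄ O₁₂ O₃₄ hA₁ hA₂ hA₃ hA₄ hO₁₂ hO₃₄
end
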